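/- IDUE-PS satisfies MinID-LDP (Theorem 3): Let m, ℓ ≥ 1 and let a_k, b_k ∈ ℝ with 0 < b_k < a_k < 1 for k = 1,…,m+ℓ; set α_k = a_k/b_k and β_k = (1−a_k)/(1−b_k). Let ε_k ∈ ℝ for k = 1,…,m be the item privacy budgets and let the dummy budget ε* = ε_k for all k = m+1,…,m+ℓ, where ε* ∈ {ε_1,…,ε_m}. Assume the IDUE single-item MinID-LDP constraint holds on the extended domain: α_i / β_j ≤ exp(min(ε_i, ε_j)) for all i, j ∈ {1,…,m+ℓ}. For a nonempty set x ⊆ {1,…,m}, define η_x = |x|/max(|x|,ℓ), the item-set budget ε_x = ln( η_x·(∑_{i∈x} e^{ε_i})/|x| + (1−η_x)·e^{ε*} ), and the IDUE-PS output probability P(y|x) = η_x·(∑_{i∈x} Q_i(y))/|x| + (1−η_x)·(∑_{i=m+1}^{m+ℓ} Q_i(y))/ℓ, where Q_i(y) = ∏_{k=1}^{m+ℓ} p_k^{y_k}(1−p_k)^{1−y_k} with p_k = a_k if k = i and p_k = b_k otherwise. Then for all nonempty x, x' ⊆ {1,…,m} and every y ∈ {0,1}^{m+ℓ}: P(y|x)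 ≤ exp(min(ε_x, ε_{x'})) · P(y|x'). -/

import Mathlib

/-!
Changing the one-hot input only rescales the output probability: `Q_i(y)` is a factor independent
of `i` times `α_i` or `β_i` according to the bit `y_i` (`idueProb_eq`). Since `β ≤ 1 ≤ α`, the
constraint on `α_i / β_j` gives `Q_i(y) ≤ e^{min(ε_i, ε_j)} Q_j(y)` for all `i, j`
(`idueProb_le`).

The mechanism's output probability and `e^{ε_x}` are the averages of `Q` and of `e^ε` under the
same probability weights `padWeight`, so only averages have to be compared. The bound with `ε_x` is
direct averaging of `Q_i ≤ e^{ε_i} Q_j`. For the bound with `ε_{x'}`, averaging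
`P(y|x) e^{-ε_j} ≤ Q_j` over `j` bounds `P(y|x)` by the weighted harmonic mean of `e^{ε_j}` times
`P(y|x')`, and the harmonic mean is at most the arithmetic mean `e^{ε_{x'}}` (`mixture_le_right`).
-/

/-- Output probability of IDUE given one-hot input `v_i` over `N` bits. -/
noncomputable def idueProb {N : ℕ} (a b : Fin N → ℝ) (i : Fin N)
    (y : Fin N → Bool) : ℝ :=
  ∏ k, if y k then (if k = i then a k else b k) else (1 - if k = i then a k else b k)

/-- `η_x = |x| / max(|x|, ℓ)`: the probability of sampling a genuine item from
the padded set of `x`. -/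
noncomputable def padEta (ℓ : ℕ) {N : ℕ} (x : Finset (Fin N)) : ℝ :=
  (x.card : ℝ) / max (x.card : ℝ) (ℓ : ℝ)

/-- Output probability `Pr(y|x)` of the IDUE-PS mechanism on item-set input `x`,
over item domain `{0,…,m-1}` with `ℓ` dummy items `{m,…,m+ℓ-1}`. -/
noncomputable def iduePSProb (m ℓ : ℕ) (a b : Fin (m + ℓ) → ℝ)
    (x : Finset (Fin (m + ℓ))) (y : Fin (m + ℓ) → Bool) : ℝ :=
  padEta ℓ x * (∑ i ∈ x, idueProb a b i y) / x.card +
    (1 - padEta ℓ x) *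
      (∑ i ∈ Finset.univ.filter (fun k : Fin (m + ℓ) => m ≤ (k : ℕ)),
        idueProb a b i y) / ℓ

/-- The combined privacy budget `ε_x` of an item-set `x`. -/
noncomputable def itemSetBudget (ℓ : ℕ) {N : ℕ} (ε : Fin N → ℝ) (εstar : ℝ)
    (x : Finset (Fin N)) : ℝ :=
  Real.log (padEta ℓ x * (∑ i ∈ x, Real.exp (ε i)) / x.card +
    (1 - padEta ℓ x) * Real.exp εstar)

theorem idueProb_eq {N : ℕ} (a b : Fin N → ℝ) (hb : ∀ k, 0 < b k) (hb1 : ∀ k, b k < 1)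
    (i : Fin N) (y : Fin N → Bool) :
    idueProb a b i y = (∏ k, if y k then b k else 1 - b k) *
      (if y i then a i / b i else (1 - a i) / (1 - b i)) := by
  have h : (if y i then a i / b i else (1 - a i) / (1 - b i)) =
      ∏ k, if k = i then (if y k then a k / b k else (1 - a k) / (1 - b k)) else 1 := by
    simp
  rw [h, ← Finset.prod_mul_distrib]
  refine Finset.prod_congr rfl fun k _ => ?_
  have h0 : b k ≠ 0 := (hb k).ne'
  have h1 : 1 - b k ≠ 0 := (sub_pos.2 (hb1 k)).ne'
  by_cases hk : k = i <;> cases y k <;> simp [hk] <;> subst hk <;> field_simp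

theorem idueProb_nonneg {N : ℕ} (a b : Fin N → ℝ) (hb : ∀ k, 0 < b k)
    (hba : ∀ k, b k < a k) (ha : ∀ k, a k < 1) (i : Fin N) (y : Fin N → Bool) :
    0 ≤ idueProb a b i y := by
  refine Finset.prod_nonneg fun k _ => ?_
  have := hb k
  have := hba k
  have := ha k
  split_ifs <;> linarith

theorem idueProb_le {N : ℕ} (a b : Fin N → ℝ) (hb : ∀ k, 0 < b k)
    (hba : ∀ k, b k < a k) (ha : ∀ k, a k < 1) (ε : Fin N → ℝ)
    (hc : ∀ i j : Fin N,
      (a i / b i) / ((1 - a j) / (1 - b j)) ≤ Real.exp (min (ε i) (ε j)))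
    (i j : Fin N) (y : Fin N → Bool) :
    idueProb a b i y ≤ Real.exp (min (ε i) (ε j)) * idueProb a b j y := by
  have hb1 : ∀ k, b k < 1 := fun k => (hba k).trans (ha k)
  have hα : ∀ k, 1 ≤ a k / b k := fun k => (one_le_div (hb k)).2 (hba k).le
  have hβ : ∀ k, (1 - a k) / (1 - b k) ≤ 1 := fun k =>
    (div_le_one (sub_pos.2 (hb1 k))).2 (by linarith [hba k])
  have hβ0 : ∀ k, 0 < (1 - a k) / (1 - b k) := fun k =>
    div_pos (sub_pos.2 (ha k)) (sub_pos.2 (hb1 k))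
  rw [idueProb_eq a b hb hb1 i y, idueProb_eq a b hb hb1 j y, mul_left_comm]
  refine mul_le_mul_of_nonneg_left ?_ (Finset.prod_nonneg fun k _ => ?_)
  · calc (if y i then a i / b i else (1 - a i) / (1 - b i)) ≤ a i / b i := by
          split_ifs
          · exact le_rfl
          · exact (hβ i).trans (hα i)
      _ ≤ Real.exp (min (ε i) (ε j)) * ((1 - a j) / (1 - b j)) :=
          (div_le_iff₀ (hβ0 j)).1 (hc i j)
      _ ≤ _ := by
          refine mul_le_mul_of_nonneg_left ?_ (Real.exp_pos _).le
          split_ifs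
          · exact (hβ j).trans (hα j)
          · exact le_rfl
  · have := hb k
    have := hb1 k
    split_ifs <;> linarith

/-- Probability that padding-and-sampling applied to the item-set `x` selects the item `k` of the
extended domain. -/
noncomputable def padWeight (m ℓ : ℕ) (x : Finset (Fin (m + ℓ))) (k : Fin (m + ℓ)) : ℝ :=
  (if k ∈ x then padEta ℓ x / x.card else 0) + (if m ≤ (k : ℕ) then (1 - padEta ℓ x) / ℓ else 0)

theorem padWeight_nonneg (m ℓ : ℕ) (x : Finset (Fin (m + ℓ))) (k : Fin (m + ℓ)) :
    0 ≤ padWeight m ℓ x k := by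
  have h0 : 0 ≤ padEta ℓ x := by unfold padEta; positivity
  have h1 : padEta ℓ x ≤ 1 := div_le_one_of_le₀ (le_max_left _ _) (by positivity)
  have h2 : 0 ≤ 1 - padEta ℓ x := by linarith
  unfold padWeight
  split_ifs <;> positivity

theorem sum_padWeight_mul (m ℓ : ℕ) (x : Finset (Fin (m + ℓ))) (g : Fin (m + ℓ) → ℝ) :
    ∑ k, padWeight m ℓ x k * g k = padEta ℓ x * (∑ i ∈ x, g i) / x.card +
      (1 - padEta ℓ x) *
        (∑ i ∈ Finset.univ.filter (fun k : Fin (m + ℓ) => m ≤ (k : ℕ)), g i) / ℓ := by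
  simp only [padWeight, add_mul, Finset.sum_add_distrib, ite_mul, zero_mul]
  rw [← Finset.sum_filter, ← Finset.sum_filter, Finset.filter_univ_mem, ← Finset.mul_sum,
    ← Finset.mul_sum]
  ring

theorem card_dummies (m ℓ : ℕ) :
    (Finset.univ.filter (fun k : Fin (m + ℓ) => m ≤ (k : ℕ))).card = ℓ := by
  rw [Finset.card_filter, Fin.sum_univ_add]
  simp

theorem sum_padWeight_mul_of_dummy_eq (m ℓ : ℕ) (hℓ : 1 ≤ ℓ) (x : Finset (Fin (m + ℓ)))
    (g : Fin (m + ℓ) → ℝ) (c : ℝ) (hg : ∀ k : Fin (m + ℓ), m ≤ (k : ℕ) → g k = c) :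
    ∑ k, padWeight m ℓ x k * g k =
      padEta ℓ x * (∑ i ∈ x, g i) / x.card + (1 - padEta ℓ x) * c := by
  have hℓ0 : (ℓ : ℝ) ≠ 0 := by exact_mod_cast (by omega : ℓ ≠ 0)
  rw [sum_padWeight_mul, Finset.sum_congr rfl (g := fun _ => c)
    (fun k hk => hg k (Finset.mem_filter.1 hk).2), Finset.sum_const, card_dummies, nsmul_eq_mul]
  field_simp

theorem sum_padWeight (m ℓ : ℕ) (hℓ : 1 ≤ ℓ) (x : Finset (Fin (m + ℓ))) (hx : x.Nonempty) :
    ∑ k, padWeight m ℓ x k = 1 := by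
  have hc : (x.card : ℝ) ≠ 0 := by exact_mod_cast hx.card_pos.ne'
  have h := sum_padWeight_mul_of_dummy_eq m ℓ hℓ x (fun _ => 1) 1 (fun _ _ => rfl)
  simp only [mul_one, Finset.sum_const, nsmul_eq_mul] at h
  rw [h, mul_div_cancel_right₀ _ hc]
  ring

theorem mixture_le_left {ι : Type*} [Fintype ι] (w v Q e : ι → ℝ) (hw : ∀ i, 0 ≤ w i)
    (hv : ∀ i, 0 ≤ v i) (hv1 : ∑ i, v i = 1) (h : ∀ i j, Q i ≤ e i * Q j) :
    ∑ i, w i * Q i ≤ (∑ i, w i * e i) * ∑ j, v j * Q j := by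
  rw [Finset.sum_mul]
  refine Finset.sum_le_sum fun i _ => ?_
  rw [mul_assoc]
  refine mul_le_mul_of_nonneg_left ?_ (hw i)
  calc Q i = ∑ j, v j * Q i := by rw [← Finset.sum_mul, hv1, one_mul]
    _ ≤ ∑ j, v j * (e i * Q j) :=
        Finset.sum_le_sum fun j _ => mul_le_mul_of_nonneg_left (h i j) (hv j)
    _ = e i * ∑ j, v j * Q j := by
        rw [Finset.mul_sum]
        exact Finset.sum_congr rfl fun j _ => by ring

/-- Here the ratio bound `e j` varies with the index being averaged on the right, so averaging
gives the harmonic mean of `e`; the arithmetic mean dominates it by Cauchy–Schwarz. -/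
theorem mixture_le_right {ι : Type*} [Fintype ι] (w v Q e : ι → ℝ) (hw : ∀ i, 0 ≤ w i)
    (hv : ∀ i, 0 ≤ v i) (hw1 : ∑ i, w i = 1) (hv1 : ∑ i, v i = 1) (hQ : ∀ i, 0 ≤ Q i)
    (he : ∀ i, 0 < e i) (h : ∀ i j, Q i ≤ e j * Q j) :
    ∑ i, w i * Q i ≤ (∑ j, v j * e j) * ∑ j, v j * Q j := by
  set P := ∑ i, w i * Q i with hP
  have hP0 : 0 ≤ P := Finset.sum_nonneg fun i _ => mul_nonneg (hw i) (hQ i)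
  have hPj : ∀ j, P ≤ e j * Q j := fun j => by
    calc P ≤ ∑ i, w i * (e j * Q j) :=
          Finset.sum_le_sum fun i _ => mul_le_mul_of_nonneg_left (h i j) (hw i)
      _ = e j * Q j := by rw [← Finset.sum_mul, hw1, one_mul]
  have hharm : (∑ j, v j * (e j)⁻¹) * P ≤ ∑ j, v j * Q j := by
    rw [Finset.sum_mul]
    refine Finset.sum_le_sum fun j _ => ?_
    rw [mul_assoc]
    exact mul_le_mul_of_nonneg_left ((inv_mul_le_iff₀ (he j)).2 (hPj j)) (hv j)
  have hCS : (∑ j, v j) ^ 2 ≤ (∑ j, v j * e j) * ∑ j, v j * (e j)⁻¹ :=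
    Finset.sum_sq_le_sum_mul_sum_of_sq_le_mul _
      (fun j _ => mul_nonneg (hv j) (he j).le)
      (fun j _ => mul_nonneg (hv j) (inv_pos.2 (he j)).le)
      (fun j _ => le_of_eq (by have := (he j).ne'; field_simp))
  rw [hv1, one_pow] at hCS
  have hE : 0 ≤ ∑ j, v j * e j := Finset.sum_nonneg fun j _ => mul_nonneg (hv j) (he j).le
  calc P = 1 * P := (one_mul P).symm
    _ ≤ ((∑ j, v j * e j) * ∑ j, v j * (e j)⁻¹) * P := mul_le_mul_of_nonneg_right hCS hP0
    _ = (∑ j, v j * e j) * ((∑ j, v j * (e j)⁻¹) * P) := mul_assoc _ _ _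
    _ ≤ _ := mul_le_mul_of_nonneg_left hharm hE

theorem idue_ps_satisfies_minid_ldp (m ℓ : ℕ) (hm : 1 ≤ m) (hℓ : 1 ≤ ℓ)
    (a b : Fin (m + ℓ) → ℝ)
    (hb : ∀ k, 0 < b k) (hba : ∀ k, b k < a k) (ha : ∀ k, a k < 1)
    (ε : Fin (m + ℓ) → ℝ) (εstar : ℝ)
    (hstar_mem : ∃ i : Fin (m + ℓ), (i : ℕ) < m ∧ ε i = εstar)
    (hdummy : ∀ k : Fin (m + ℓ), m ≤ (k : ℕ) → ε k = εstar)
    (hconstraint : ∀ i j : Fin (m + ℓ),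
      (a i / b i) / ((1 - a j) / (1 - b j)) ≤ Real.exp (min (ε i) (ε j)))
    (x x' : Finset (Fin (m + ℓ)))
    (hxne : x.Nonempty) (hx'ne : x'.Nonempty)
    (hx : ∀ k ∈ x, (k : ℕ) < m) (hx' : ∀ k ∈ x', (k : ℕ) < m)
    (y : Fin (m + ℓ) → Bool) :
    iduePSProb m ℓ a b x y ≤
      Real.exp (min (itemSetBudget ℓ ε εstar x) (itemSetBudget ℓ ε εstar x')) *
        iduePSProb m ℓ a b x' y := by
  have hexp : ∀ z : Finset (Fin (m + ℓ)), z.Nonempty →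
      Real.exp (itemSetBudget ℓ ε εstar z) = ∑ k, padWeight m ℓ z k * Real.exp (ε k) := by
    intro z hz
    rw [itemSetBudget, ← sum_padWeight_mul_of_dummy_eq m ℓ hℓ z (fun k => Real.exp (ε k)) _
      (fun k hk => by rw [hdummy k hk]), Real.exp_log]
    -- The average is positive because the weights are nonnegative and do not all vanish.
    obtain ⟨k, hk, hk0⟩ : ∃ k ∈ Finset.univ, padWeight m ℓ z k ≠ 0 :=
      Finset.exists_ne_zero_of_sum_ne_zero (by rw [sum_padWeight m ℓ hℓ z hz]; exact one_ne_zero)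
    exact Finset.sum_pos' (fun i _ => mul_nonneg (padWeight_nonneg m ℓ z i) (Real.exp_pos _).le)
      ⟨k, hk, mul_pos ((padWeight_nonneg m ℓ z k).lt_of_ne' hk0) (Real.exp_pos _)⟩
  have hprob : ∀ z, iduePSProb m ℓ a b z y = ∑ k, padWeight m ℓ z k * idueProb a b k y :=
    fun z => (sum_padWeight_mul m ℓ z _).symm
  have hQ := fun k => idueProb_nonneg a b hb hba ha k y
  have hle := fun i j => idueProb_le a b hb hba ha ε hconstraint i j y
  rcases min_choice (itemSetBudget ℓ ε εstar x) (itemSetBudget ℓ ε εstar x') with h | h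
  · rw [h, hexp x hxne, hprob, hprob]
    exact mixture_le_left _ _ _ _ (padWeight_nonneg m ℓ x) (padWeight_nonneg m ℓ x')
      (sum_padWeight m ℓ hℓ x' hx'ne) fun i j => (hle i j).trans
        (mul_le_mul_of_nonneg_right (Real.exp_le_exp.2 (min_le_left _ _)) (hQ j))
  · rw [h, hexp x' hx'ne, hprob, hprob]
    exact mixture_le_right _ _ _ _ (padWeight_nonneg m ℓ x) (padWeight_nonneg m ℓ x')
      (sum_padWeight m ℓ hℓ x hxne) (sum_padWeight m ℓ hℓ x' hx'ne) hQ
      (fun k => Real.exp_pos (ε k)) fun i j => (hle i j).trans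
        (mul_le_mul_of_nonneg_right (Real.exp_le_exp.2 (min_le_right _ _)) (hQ j))
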